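/- arXiv:1804.02268 — 2 statements merged into one kernel-verified Lean document; each statement's English description precedes it below -/
import Mathlib

section
/- (Price characterization for affine maximizers.) Let (x,t) be a social choice mechanism on an unrestricted parallel utility domain 𝒰 that is DSIC, deterministic, onto, IR, satisfies no subsidy, and whose choice rule satisfies x(u) ∈ argmax_{a∈A} (Σ_i k_i p_{i,a} + C_a) for all u ∈ 𝒰, with nonnegative weights (k_i) and real constants (C_a). Then the agent-independent prices are determined as follows: (i) for every agent i with k_i > 0 and every u_{-i} ∈ 𝒰_{-i}, with a*_{-i} ∈ argmax_{a∈A} (Σ_{j≠i} k_j p_{j,a} + C_a), one has t_{i,a}(u_{-i}) = (1/k_i)(Σ_{j≠i} k_j p_{j,a*_{-i}} + C_{a*_{-i}} − Σ_{j≠i} k_j p_{j,a} − C_a) for every a ∈ A; (ii) for every agent i with k_i = 0 and every u_{-i} ∈ 𝒰_{-i} for which there is a*_{-i} ∈ A with Σ_{j≠i} k_j p_{j,a} + C_a < Σ_{j≠i} k_j p_{j,a*_{-i}} + C_{a*_{-i}} for all a ≠ a*_{-i}, one has t_{i,a*_{-i}}(u_{-i}) = 0 and t_{i,a}(u_{-i})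 = +∞ for all a ≠ a*_{-i} (i.e. no report of agent i makes x select a). -/
/-!
Common framework: agents indexed by `I`, alternatives `A` (finite, nonempty).
A type of an agent is a family `u : A → ℝ → ℝ`, where `u a z` is the utility
when alternative `a` is selected and the agent pays `z`.
-/

noncomputable section

namespace NQLSC

/-- A type (utility family) of an agent. -/
abbrev Util (A : Type*) := A → ℝ → ℝ

variable {A I : Type*}

/-- (S1): each `u a` is continuous and strictly decreasing in the payment. -/
def S1 (u : Util A) : Prop := ∀ a, Continuous (u a) ∧ StrictAnti (u a)

/-- `min_{a'∈A} u_{a'}(0)`, the value of the worst alternative at zero payment. -/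
def minVal [Fintype A] [Nonempty A] (u : Util A) : ℝ :=
  Finset.univ.inf' Finset.univ_nonempty (fun a => u a 0)

/-- (S2): as the payment tends to `+∞`, the utility of every alternative drops
(strictly) below `min_{a'} u_{a'}(0)`; for strictly decreasing utilities this is
equivalent to the utility being below that value at some payment. -/
def S2 [Fintype A] [Nonempty A] (u : Util A) : Prop :=
  ∀ a, ∃ z : ℝ, u a z < minVal u

/-- The willingness to pay `p_a = u_a⁻¹(min_{a'} u_{a'}(0))` (under (S1),(S2) this
`sInf` is the unique payment at which `u a` attains `minVal u`). -/
def wtp [Fintype A] [Nonempty A] (u : Util A) (a : A) : ℝ :=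
  sInf {z : ℝ | u a z ≤ minVal u}

/-- A parallel type: (S1), (S2), and for all `a, b` with `v_a ≥ v_b` and all
`z ∈ [0, p_b]`, `u_a (z + (p_a − p_b)) = u_b z`. -/
def IsParallel [Fintype A] [Nonempty A] (u : Util A) : Prop :=
  S1 u ∧ S2 u ∧ ∀ a b : A, u b 0 ≤ u a 0 → ∀ z : ℝ, 0 ≤ z → z ≤ wtp u b →
    u a (z + (wtp u a - wtp u b)) = u b z

/-- Unrestricted willingness to pay: every nonnegative vector with a zero entry is
the willingness-to-pay vector of some type in the domain. -/
def UnrestrictedWTP [Fintype A] [Nonempty A] (U : Set (Util A)) : Prop :=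
  ∀ lam : A → ℝ, (∀ a, 0 ≤ lam a) → (∃ a, lam a = 0) →
    ∃ u ∈ U, ∀ a, wtp u a = lam a

/-- Dominant-strategy incentive compatibility of a (deterministic) mechanism `(x,t)`
on the domain `𝒰 = ∏ i, U i`. -/
def DSIC [DecidableEq I] (U : I → Set (Util A)) (x : (I → Util A) → A)
    (t : (I → Util A) → I → ℝ) : Prop :=
  ∀ uh : I → Util A, (∀ j, uh j ∈ U j) → ∀ i, ∀ ui ∈ U i,
    ui (x uh) (t uh i) ≤
      ui (x (Function.update uh i ui)) (t (Function.update uh i ui) i)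

/-- Individual rationality. -/
def IR [Fintype A] [Nonempty A] [DecidableEq I] (U : I → Set (Util A))
    (x : (I → Util A) → A) (t : (I → Util A) → I → ℝ) : Prop :=
  ∀ uh : I → Util A, (∀ j, uh j ∈ U j) → ∀ i, ∀ ui ∈ U i,
    minVal ui ≤ ui (x (Function.update uh i ui)) (t (Function.update uh i ui) i)

/-- No subsidy: the mechanism never makes positive transfers to an agent. -/
def NoSubsidy (U : I → Set (Util A)) (t : (I → Util A) → I → ℝ) : Prop :=
  ∀ u : I → Util A, (∀ j, u j ∈ U j) → ∀ i, 0 ≤ t u i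

/-- Ontoness of the choice rule on the given domain. -/
def OntoMech (U : I → Set (Util A)) (x : (I → Util A) → A) : Prop :=
  ∀ a, ∃ u : I → Util A, (∀ j, u j ∈ U j) ∧ x u = a

/-!
Once the reports of the others are fixed, agent `i` faces a take-it-or-leave-it price for each
alternative `a`. A type valuing only `a`, at `r`, selects `a` when `k i * r` exceeds the deficit
of `a` in the objective of the others, and does not when it falls short of it. In the first case
individual rationality caps the price of `a` at `r`; in the second the type gets at most its worst
value, so incentive compatibility keeps it from affording `a`, and the price is at least `r`.
Letting `r` approach the critical value `deficit / k i` from both sides determines the price.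

An agent of zero weight cannot affect a strictly optimal choice, and the type with zero
willingness to pay everywhere caps its price at zero.
-/

section SingleAgent

variable [Fintype A] [Nonempty A]

theorem minVal_le_apply_zero (u : Util A) (a : A) : minVal u ≤ u a 0 :=
  Finset.inf'_le _ (Finset.mem_univ a)

theorem apply_wtp {u : Util A} (h1 : S1 u) (h2 : S2 u) (a : A) : u a (wtp u a) = minVal u := by
  obtain ⟨y, hy⟩ := h2 a
  obtain ⟨z, hz⟩ : minVal u ∈ Set.range (u a) :=
    mem_range_of_exists_le_of_exists_ge (h1 a).1 ⟨y, hy.le⟩ ⟨0, minVal_le_apply_zero u a⟩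
  have hset : {w | u a w ≤ minVal u} = Set.Ici z :=
    Set.ext fun w => by rw [Set.mem_ofPred_eq, ← hz, (h1 a).2.le_iff_ge, Set.mem_Ici]
  rw [wtp, hset, csInf_Ici, hz]

theorem minVal_le_apply_iff {u : Util A} (h1 : S1 u) (h2 : S2 u) {a : A} {z : ℝ} :
    minVal u ≤ u a z ↔ z ≤ wtp u a := by
  rw [← apply_wtp h1 h2 a, (h1 a).2.le_iff_ge]

theorem UnrestrictedWTP.exists_wtp_eq_single [DecidableEq A] [Nontrivial A] {V : Set (Util A)}
    (hV : UnrestrictedWTP V) (a : A) {r : ℝ} (hr : 0 ≤ r) : ∃ u ∈ V, wtp u = Pi.single a r := by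
  obtain ⟨b, hb⟩ := exists_ne a
  have hnonneg : (0 : A → ℝ) ≤ Pi.single a r := Pi.single_nonneg.mpr hr
  obtain ⟨u, hu, hwtp⟩ := hV (Pi.single a r) hnonneg ⟨b, by rw [Pi.single_eq_of_ne hb]⟩
  exact ⟨u, hu, funext hwtp⟩

/-- The mechanism that one agent with type set `V` faces when the reports of the others are held
fixed: reporting `u` yields alternative `f u` at payment `p u`, subject to incentive compatibility,
individual rationality and no subsidy. Nothing is required of reports outside `V`. -/
structure IsSingleAgentMechanism (V : Set (Util A)) (f : Util A → A) (p : Util A → ℝ) :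
    Prop where
  truthful : ∀ u ∈ V, ∀ v ∈ V, u (f v) (p v) ≤ u (f u) (p u)
  rational : ∀ u ∈ V, minVal u ≤ u (f u) (p u)
  payment_nonneg : ∀ u ∈ V, 0 ≤ p u

namespace IsSingleAgentMechanism

variable {V : Set (Util A)} {f : Util A → A} {p : Util A → ℝ} {u w : Util A}

theorem payment_le_of_eq (hM : IsSingleAgentMechanism V f p) (hu : u ∈ V) (hw : w ∈ V)
    (hanti : StrictAnti (u (f u))) (heq : f u = f w) : p u ≤ p w := by
  have hle := hM.truthful u hu w hw
  rwa [← heq, hanti.le_iff_ge] at hle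

theorem payment_le_wtp (hM : IsSingleAgentMechanism V f p) (hu : u ∈ V) (h1 : S1 u)
    (h2 : S2 u) : p u ≤ wtp u (f u) :=
  (minVal_le_apply_iff h1 h2).mp (hM.rational u hu)

theorem payment_le_wtp_of_eq (hM : IsSingleAgentMechanism V f p)
    (hV : ∀ v ∈ V, S1 v ∧ S2 v) (hu : u ∈ V) (hw : w ∈ V) (heq : f u = f w) :
    p u ≤ wtp w (f w) :=
  (hM.payment_le_of_eq hu hw ((hV u hu).1 _).2 heq).trans
    (hM.payment_le_wtp hw (hV w hw).1 (hV w hw).2)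

theorem wtp_le_payment_of_wtp_eq_zero (hM : IsSingleAgentMechanism V f p) (hu : u ∈ V)
    (hw : w ∈ V) (h1 : S1 w) (h2 : S2 w) (hzero : wtp w (f w) = 0) : wtp w (f u) ≤ p u := by
  rw [← (h1 (f u)).2.le_iff_ge]
  calc
    w (f u) (p u) ≤ w (f w) (p w) := hM.truthful w hw u hu
    _ ≤ w (f w) (wtp w (f w)) :=
      (h1 (f w)).2.antitone (hzero.trans_le (hM.payment_nonneg w hw))
    _ = w (f u) (wtp w (f u)) := by rw [apply_wtp h1 h2, apply_wtp h1 h2]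

theorem payment_eq_zero_of_forall_eq (hM : IsSingleAgentMechanism V f p)
    (hV : ∀ v ∈ V, S1 v ∧ S2 v) (hunr : UnrestrictedWTP V) {a : A} (hf : ∀ v ∈ V, f v = a)
    (hu : u ∈ V) : p u = 0 := by
  obtain ⟨w, hw, hzero⟩ := hunr 0 (fun _ => le_rfl) ⟨a, rfl⟩
  have hle := hM.payment_le_wtp_of_eq hV hu hw ((hf u hu).trans (hf w hw).symm)
  exact le_antisymm (hle.trans_eq (hzero _)) (hM.payment_nonneg u hu)

end IsSingleAgentMechanism

/-- The choice rule `f` of a single agent with type set `V` maximizes `κ * wtp u a + S a` over the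
alternatives `a`: the affine-maximizer condition, with everything that does not depend on the
report `u` collected in `S`. -/
def IsAffineMaximizer (V : Set (Util A)) (f : Util A → A) (κ : ℝ) (S : A → ℝ) : Prop :=
  ∀ u ∈ V, ∀ b, κ * wtp u b + S b ≤ κ * wtp u (f u) + S (f u)

namespace IsAffineMaximizer

variable {V : Set (Util A)} {f : Util A → A} {p : Util A → ℝ} {κ : ℝ} {S : A → ℝ}
  {u : Util A} {a astar : A}

theorem eq_of_forall_lt (hf : IsAffineMaximizer V f 0 S) (hstar : ∀ c, c ≠ astar → S c < S astar)
    (hu : u ∈ V) : f u = astar := by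
  by_contra hne
  have hmax := hf u hu astar
  simp only [zero_mul, zero_add] at hmax
  exact (hstar _ hne).not_ge hmax

theorem eq_of_wtp_eq_single [DecidableEq A] (hf : IsAffineMaximizer V f κ S)
    (hstar : ∀ c, S c ≤ S astar) (hu : u ∈ V) {r : ℝ} (hwtp : wtp u = Pi.single a r)
    (hr : S astar - S a < κ * r) : f u = a := by
  by_contra hne
  have hmax := hf u hu a
  rw [hwtp, Pi.single_eq_same, Pi.single_eq_of_ne hne] at hmax
  linarith [hstar (f u)]

theorem ne_of_wtp_eq_single [DecidableEq A] (hf : IsAffineMaximizer V f κ S) (hu : u ∈ V) {r : ℝ}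
    (hκr : 0 ≤ κ * r) (hwtp : wtp u = Pi.single a r) (hr : κ * r < S astar - S a) : f u ≠ a := by
  intro heq
  have hne : astar ≠ a := fun h => by rw [h] at hr; linarith
  have hmax := hf u hu astar
  rw [heq, hwtp, Pi.single_eq_same, Pi.single_eq_of_ne hne] at hmax
  linarith

theorem exists_eq (hf : IsAffineMaximizer V f κ S) (hunr : UnrestrictedWTP V) (hκ : 0 < κ)
    (hstar : ∀ c, S c ≤ S astar) (a : A) : ∃ u ∈ V, f u = a := by
  classical
  cases subsingleton_or_nontrivial A
  · obtain ⟨u, hu, -⟩ := hunr 0 (fun _ => le_rfl) ⟨a, rfl⟩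
    exact ⟨u, hu, Subsingleton.elim _ _⟩
  · obtain ⟨r, hr⟩ := exists_gt ((S astar - S a) / κ)
    have hr0 : 0 ≤ r := (div_nonneg (sub_nonneg.mpr (hstar a)) hκ.le).trans hr.le
    obtain ⟨u, hu, hwtp⟩ := hunr.exists_wtp_eq_single a hr0
    exact ⟨u, hu, hf.eq_of_wtp_eq_single hstar hu hwtp ((div_lt_iff₀' hκ).mp hr)⟩

theorem payment_le [Nontrivial A] (hf : IsAffineMaximizer V f κ S)
    (hM : IsSingleAgentMechanism V f p) (hV : ∀ v ∈ V, S1 v ∧ S2 v) (hunr : UnrestrictedWTP V)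
    (hκ : 0 < κ) (hstar : ∀ c, S c ≤ S astar) (hu : u ∈ V) :
    p u ≤ (S astar - S (f u)) / κ := by
  classical
  refine le_of_forall_gt_imp_ge_of_dense fun r hr => ?_
  have hr0 : 0 ≤ r := (div_nonneg (sub_nonneg.mpr (hstar (f u))) hκ.le).trans hr.le
  obtain ⟨w, hw, hwtp⟩ := hunr.exists_wtp_eq_single (f u) hr0
  have heq : f w = f u := hf.eq_of_wtp_eq_single hstar hw hwtp ((div_lt_iff₀' hκ).mp hr)
  have hle := hM.payment_le_wtp_of_eq hV hu hw heq.symm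
  rwa [heq, hwtp, Pi.single_eq_same] at hle

theorem le_payment [Nontrivial A] (hf : IsAffineMaximizer V f κ S)
    (hM : IsSingleAgentMechanism V f p) (hV : ∀ v ∈ V, S1 v ∧ S2 v) (hunr : UnrestrictedWTP V)
    (hκ : 0 < κ) (hu : u ∈ V) : (S astar - S (f u)) / κ ≤ p u := by
  classical
  refine le_of_forall_lt_imp_le_of_dense fun r hr => ?_
  rcases lt_or_ge r 0 with hneg | hr0
  · exact hneg.le.trans (hM.payment_nonneg u hu)
  · obtain ⟨w, hw, hwtp⟩ := hunr.exists_wtp_eq_single (f u) hr0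
    have hne : f w ≠ f u :=
      hf.ne_of_wtp_eq_single hw (mul_nonneg hκ.le hr0) hwtp ((lt_div_iff₀' hκ).mp hr)
    have hzero : wtp w (f w) = 0 := by rw [hwtp, Pi.single_eq_of_ne hne]
    have hle := hM.wtp_le_payment_of_wtp_eq_zero hu hw (hV w hw).1 (hV w hw).2 hzero
    rwa [hwtp, Pi.single_eq_same] at hle

theorem payment_eq (hf : IsAffineMaximizer V f κ S) (hM : IsSingleAgentMechanism V f p)
    (hV : ∀ v ∈ V, S1 v ∧ S2 v) (hunr : UnrestrictedWTP V) (hκ : 0 < κ)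
    (hstar : ∀ c, S c ≤ S astar) (hu : u ∈ V) : p u = (S astar - S (f u)) / κ := by
  cases subsingleton_or_nontrivial A
  · rw [hM.payment_eq_zero_of_forall_eq hV hunr (fun _ _ => Subsingleton.elim _ (f u)) hu,
      Subsingleton.elim astar (f u), sub_self, zero_div]
  · exact le_antisymm (hf.payment_le hM hV hunr hκ hstar hu) (hf.le_payment hM hV hunr hκ hu)

end IsAffineMaximizer

end SingleAgent

section FixedOthers

variable [DecidableEq I] {U : I → Set (Util A)} {x : (I → Util A) → A}
  {t : (I → Util A) → I → ℝ} {uh : I → Util A}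

theorem update_mem (huh : ∀ j, uh j ∈ U j) {i : I} {ui : Util A} (hui : ui ∈ U i) (j : I) :
    Function.update uh i ui j ∈ U j :=
  (Function.forall_update_iff uh fun j v => v ∈ U j).mpr ⟨hui, fun j _ => huh j⟩ j

variable [Fintype A] [Nonempty A]

theorem DSIC.isSingleAgentMechanism (hDSIC : DSIC U x t) (hIR : IR U x t) (hNS : NoSubsidy U t)
    (huh : ∀ j, uh j ∈ U j) (i : I) :
    IsSingleAgentMechanism (U i) (fun v => x (Function.update uh i v))
      (fun v => t (Function.update uh i v) i) where
  truthful u hu v hv := by simpa using hDSIC _ (update_mem huh hv) i u hu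
  rational := hIR uh huh i
  payment_nonneg _ hu := hNS _ (update_mem huh hu) i

variable [Fintype I]

/-- The affine objective `∑_{j ≠ i} k_j p_{j,c} + C_c`: the objective at the profile `uh`
with the term of agent `i` left out. -/
def othersObjective (k : I → ℝ) (C : A → ℝ) (uh : I → Util A) (i : I) (c : A) : ℝ :=
  (∑ j ∈ Finset.univ.erase i, k j * wtp (uh j) c) + C c

theorem sum_mul_wtp_update_add (k : I → ℝ) (C : A → ℝ) (uh : I → Util A) (i : I) (v : Util A)
    (c : A) :
    (∑ j, k j * wtp (Function.update uh i v j) c) + C c =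
      k i * wtp v c + othersObjective k C uh i c := by
  have hothers : ∑ j ∈ Finset.univ.erase i, k j * wtp (Function.update uh i v j) c =
      ∑ j ∈ Finset.univ.erase i, k j * wtp (uh j) c :=
    Finset.sum_congr rfl fun j hj => by rw [Function.update_of_ne (Finset.ne_of_mem_erase hj)]
  rw [← Finset.add_sum_erase _ _ (Finset.mem_univ i), Function.update_self, hothers, add_assoc,
    othersObjective]

theorem isAffineMaximizer_update {k : I → ℝ} {C : A → ℝ}
    (hx : ∀ u : I → Util A, (∀ j, u j ∈ U j) → ∀ b : A,
      (∑ i, k i * wtp (u i) b) + C b ≤ (∑ i, k i * wtp (u i) (x u)) + C (x u))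
    (huh : ∀ j, uh j ∈ U j) (i : I) :
    IsAffineMaximizer (U i) (fun v => x (Function.update uh i v)) (k i)
      (othersObjective k C uh i) := by
  intro v hv b
  simpa only [sum_mul_wtp_update_add] using hx _ (update_mem huh hv) b

end FixedOthers

theorem price_characterization_general
    [Fintype A] [Nonempty A] [Fintype I] [DecidableEq I]
    (U : I → Set (Util A)) (hU : ∀ i, ∀ u ∈ U i, S1 u ∧ S2 u)
    (hunr : ∀ i, UnrestrictedWTP (U i))
    (x : (I → Util A) → A) (t : (I → Util A) → I → ℝ)
    (hDSIC : DSIC U x t) (hIR : IR U x t) (hNS : NoSubsidy U t)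
    (k : I → ℝ) (C : A → ℝ)
    (hx : ∀ u : I → Util A, (∀ j, u j ∈ U j) → ∀ b : A,
      (∑ i, k i * wtp (u i) b) + C b ≤ (∑ i, k i * wtp (u i) (x u)) + C (x u)) :
    (∀ uh : I → Util A, (∀ j, uh j ∈ U j) → ∀ i, 0 < k i → ∀ astar : A,
      (∀ c, othersObjective k C uh i c ≤ othersObjective k C uh i astar) → ∀ a : A,
        (∃ ui ∈ U i, x (Function.update uh i ui) = a) ∧
        (∀ ui ∈ U i, x (Function.update uh i ui) = a →
          t (Function.update uh i ui) i =
            (1 / k i) * (othersObjective k C uh i astar - othersObjective k C uh i a))) ∧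
    (∀ uh : I → Util A, (∀ j, uh j ∈ U j) → ∀ i, k i = 0 → ∀ astar : A,
      (∀ c, c ≠ astar → othersObjective k C uh i c < othersObjective k C uh i astar) →
      ∀ ui ∈ U i, x (Function.update uh i ui) = astar ∧
        t (Function.update uh i ui) i = 0) := by
  refine ⟨fun uh huh i hki astar hstar a => ?_, fun uh huh i hki astar hstar ui hui => ?_⟩
  · have hM := hDSIC.isSingleAgentMechanism hIR hNS huh i
    have hmax := isAffineMaximizer_update hx huh i
    refine ⟨hmax.exists_eq (hunr i) hki hstar a, ?_⟩
    rintro ui hui rfl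
    rw [one_div_mul_eq_div]
    exact hmax.payment_eq hM (hU i) (hunr i) hki hstar hui
  · have hM := hDSIC.isSingleAgentMechanism hIR hNS huh i
    have hmax := isAffineMaximizer_update hx huh i
    rw [hki] at hmax
    have hconst : ∀ v ∈ U i, x (Function.update uh i v) = astar :=
      fun v hv => hmax.eq_of_forall_lt hstar hv
    exact ⟨hconst ui hui, hM.payment_eq_zero_of_forall_eq (hU i) (hunr i) hconst hui⟩

/-- Price characterization for affine maximizers. If a DSIC,
deterministic, onto, IR, no-subsidy mechanism on an unrestricted parallel utility
domain has a choice rule maximizing `Σ_i k_i p_{i,a} + C_a`, then the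
agent-independent prices are pinned down: (i) for `k_i > 0`, every alternative is
attainable by some report of `i` and its price equals the weighted-VCG formula;
(ii) for `k_i = 0`, when the `−i` objective has a strict maximizer `a*`, every report
of `i` selects `a*` at price `0` (so every other alternative has price `+∞`). -/
theorem price_characterization
    [Fintype A] [Nonempty A] [Fintype I] [DecidableEq I]
    (U : I → Set (Util A))
    (hpar : ∀ i, ∀ u ∈ U i, IsParallel u)
    (hunr : ∀ i, UnrestrictedWTP (U i))
    (x : (I → Util A) → A) (t : (I → Util A) → I → ℝ)
    (hDSIC : DSIC U x t) (hOnto : OntoMech U x)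
    (hIR : IR U x t) (hNS : NoSubsidy U t)
    (k : I → ℝ) (C : A → ℝ) (hk : ∀ i, 0 ≤ k i)
    (hx : ∀ u : I → Util A, (∀ j, u j ∈ U j) → ∀ b : A,
      (∑ i, k i * wtp (u i) b) + C b ≤ (∑ i, k i * wtp (u i) (x u)) + C (x u)) :
    (∀ uh : I → Util A, (∀ j, uh j ∈ U j) → ∀ i, 0 < k i →
      ∀ astar : A,
        (∀ c : A, (∑ j ∈ Finset.univ.erase i, k j * wtp (uh j) c) + C c ≤
          (∑ j ∈ Finset.univ.erase i, k j * wtp (uh j) astar) + C astar) →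
      ∀ a : A,
        (∃ ui ∈ U i, x (Function.update uh i ui) = a) ∧
        (∀ ui ∈ U i, x (Function.update uh i ui) = a →
          t (Function.update uh i ui) i = (1 / k i) *
            (((∑ j ∈ Finset.univ.erase i, k j * wtp (uh j) astar) + C astar) -
             ((∑ j ∈ Finset.univ.erase i, k j * wtp (uh j) a) + C a)))) ∧
    (∀ uh : I → Util A, (∀ j, uh j ∈ U j) → ∀ i, k i = 0 →
      ∀ astar : A,
        (∀ c : A, c ≠ astar →
          (∑ j ∈ Finset.univ.erase i, k j * wtp (uh j) c) + C c <
          (∑ j ∈ Finset.univ.erase i, k j * wtp (uh j) astar) + C astar) →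
      ∀ ui ∈ U i, x (Function.update uh i ui) = astar ∧
        t (Function.update uh i ui) i = 0) :=
  price_characterization_general U (fun i u hu => ⟨(hpar i u hu).1, (hpar i u hu).2.1⟩)
    hunr x t hDSIC hIR hNS k C hx

end NQLSC
end
end

section
/- (Roberts' theorem on strictly parallel domains.) Suppose |A| ≥ 3 and 𝒰 = ∏_i U_i is an unrestricted strictly parallel domain (each U_i is a set of strictly parallel types with unrestricted willingness to pay). Then for every social choice mechanism (x,t) on 𝒰 that is DSIC, deterministic and onto, there exist nonnegative weights k_1,…,k_n, not all zero, and real constants (C_a)_{a∈A}, such that for every u ∈ 𝒰, x(u) ∈ argmax_{a∈A} ( Σ_{i=1}^n k_i p_{i,a} + C_a ). -/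
/-!
Common framework: agents indexed by `I`, alternatives `A` (finite, nonempty).
A type of an agent is a family `u : A → ℝ → ℝ`, where `u a z` is the utility
when alternative `a` is selected and the agent pays `z`.
-/

noncomputable section

namespace NQLSC

variable {A I : Type*}

/-- A strictly parallel type: utility curves are horizontal shifts of each other
everywhere. -/
def IsStrictlyParallel [Fintype A] [Nonempty A] (u : Util A) : Prop :=
  S1 u ∧ S2 u ∧ ∀ a b : A, ∀ z : ℝ, u a (z + (wtp u a - wtp u b)) = u b z

/-!
A strictly parallel type ranks pairs (alternative, payment) by willingness to pay minus payment, so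
the mechanism induces a choice correspondence on profiles of valuations defined up to a constant for
each agent, and incentive compatibility makes it satisfy positive association of differences: an
alternative stays chosen when every agent shifts strictly towards it.

For such a correspondence let the margin `m a b α` of `a` over `b` at `α ∈ ℝ^I` be the largest `r`
such that `a` can be chosen when agent `i` values it `α i - r` more than `b`. Whether `a` or `b` is
chosen depends essentially only on the difference vector, which makes the margin antisymmetric and,
through a third alternative, additive: `m a c (α + β) = m a b α + m b c β`. With three alternatives
this functional equation forces `m a b α = L α + C a - C b` with `L` additive. As the margin is
monotone, `L` is a nonnegative linear form; it supplies the weights, and a chosen alternative is a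
maximizer because its margins are nonnegative.
-/

section FunctionalEquations

lemma exists_ne_ne_ne_of_three_le_card {X : Type*} (hX : 3 ≤ ENat.card X) :
    ∃ a b c : X, a ≠ b ∧ b ≠ c ∧ a ≠ c := by
  obtain ⟨a⟩ := (ENat.card_pos_iff_nonempty X).1 (zero_lt_three.trans_le hX)
  obtain ⟨b, hb, -⟩ := ENat.exists_ne_ne_of_three_le hX a a
  obtain ⟨c, hca, hcb⟩ := ENat.exists_ne_ne_of_three_le hX a b
  exact ⟨a, b, c, hb.symm, hcb.symm, hca.symm⟩

/-- The functional equation satisfied by the margins of a choice correspondence. Nothing is said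
about coinciding indices, so the values `m a a` are arbitrary. -/
def IsAdditiveOnTriples {X M G : Type*} [Add M] [Add G] (m : X → X → M → G) : Prop :=
  ∀ ⦃a b c⦄, a ≠ b → b ≠ c → a ≠ c → ∀ α β, m a c (α + β) = m a b α + m b c β

variable {X M G : Type*} [AddZeroClass M] [AddCommGroup G] {m : X → X → M → G}

lemma IsAdditiveOnTriples.apply_sub_apply_zero_eq (hm : IsAdditiveOnTriples m)
    (hX : 3 ≤ ENat.card X) {a b x y : X} (hab : a ≠ b) (hxy : x ≠ y) (α : M) :
    m a b α - m a b 0 = m x y α - m x y 0 := by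
  have change_right {p q r : X} (hpq : p ≠ q) (hpr : p ≠ r) :
      m p q α - m p q 0 = m p r α - m p r 0 := by
    rcases eq_or_ne q r with rfl | hqr
    · rfl
    have hα := hm hpq hqr hpr α 0
    have h0 := hm hpq hqr hpr 0 0
    rw [add_zero] at hα h0
    rw [hα, h0, add_sub_add_right_eq_sub]
  have change_left {p q r : X} (hpr : p ≠ r) (hqr : q ≠ r) :
      m p r α - m p r 0 = m q r α - m q r 0 := by
    rcases eq_or_ne p q with rfl | hpq
    · rfl
    have hα := hm hpq hqr hpr 0 α
    have h0 := hm hpq hqr hpr 0 0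
    rw [zero_add] at hα h0
    rw [hα, h0, add_sub_add_left_eq_sub]
  obtain ⟨c, hca, hcx⟩ := ENat.exists_ne_ne_of_three_le hX a x
  rw [change_right hab hca.symm, change_left hca.symm hcx.symm, change_right hcx.symm hxy]

lemma IsAdditiveOnTriples.exists_apply_zero_eq_sub (hm : IsAdditiveOnTriples m)
    (hX : 3 ≤ ENat.card X) :
    ∃ C : X → G, ∀ a b, a ≠ b → m a b 0 = C a - C b := by
  classical
  have add_at_zero {p q r : X} (hpq : p ≠ q) (hqr : q ≠ r) (hpr : p ≠ r) :
      m p r 0 = m p q 0 + m q r 0 := by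
    simpa only [add_zero] using hm hpq hqr hpr 0 0
  have antisymm {p q : X} (hpq : p ≠ q) : m p q 0 = -m q p 0 := by
    obtain ⟨r, hrp, hrq⟩ := ENat.exists_ne_ne_of_three_le hX p q
    have h := add_at_zero hpq hrq.symm hrp.symm
    rw [add_at_zero hpq.symm hrp.symm hrq.symm, ← add_assoc, right_eq_add] at h
    exact eq_neg_of_add_eq_zero_left h
  obtain ⟨o, -⟩ := exists_ne_ne_ne_of_three_le_card hX
  refine ⟨Function.update (fun a => m a o 0) o 0, fun a b hab => ?_⟩
  rcases eq_or_ne a o with rfl | ha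
  · simp [hab.symm, antisymm hab]
  rcases eq_or_ne b o with rfl | hb
  · simp [hab]
  · simp [ha, hb, add_at_zero ha hb.symm hab, antisymm hb.symm, sub_eq_add_neg]

theorem IsAdditiveOnTriples.exists_addMonoidHom (hm : IsAdditiveOnTriples m)
    (hX : 3 ≤ ENat.card X) :
    ∃ (L : M →+ G) (C : X → G), ∀ a b, a ≠ b → ∀ α, m a b α = L α + (C a - C b) := by
  obtain ⟨a, b, c, hab, hbc, hac⟩ := exists_ne_ne_ne_of_three_le_card hX
  obtain ⟨C, hC⟩ := hm.exists_apply_zero_eq_sub hX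
  have increment {x y : X} (hxy : x ≠ y) := hm.apply_sub_apply_zero_eq hX hxy hab
  have increment_add (α β : M) :
      m a b (α + β) - m a b 0 = (m a b α - m a b 0) + (m a b β - m a b 0) := by
    have h0 := hm hab hbc hac 0 0
    rw [add_zero] at h0
    rw [← increment hac, ← increment hbc β, hm hab hbc hac, h0]
    abel
  refine ⟨AddMonoidHom.mk' (fun α => m a b α - m a b 0) increment_add, C, fun x y hxy α => ?_⟩
  rw [AddMonoidHom.mk'_apply, ← increment hxy, ← hC x y hxy, sub_add_cancel]

lemma apply_eq_mul_apply_one_of_monotone {f : ℝ →+ ℝ} (hf : Monotone f) (r : ℝ) :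
    f r = r * f 1 := by
  simpa using map_real_smul f
    (MeasureTheory.Measure.AddMonoidHom.continuous_of_measurable f hf.measurable) r 1

lemma exists_nonneg_weights_of_monotone {ι : Type*} [Fintype ι] {L : (ι → ℝ) →+ ℝ}
    (hL : Monotone L) :
    ∃ k : ι → ℝ, (∀ i, 0 ≤ k i) ∧ ∀ α, L α = ∑ i, k i * α i := by
  classical
  refine ⟨fun i => L (Pi.single i 1), fun i => ?_, fun α => ?_⟩
  · rw [← map_zero L]
    exact hL (Pi.single_nonneg.2 zero_le_one)
  have coordinate (i : ι) (r : ℝ) : L (Pi.single i r) = L (Pi.single i 1) * r := by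
    have hmono : Monotone (L.comp (AddMonoidHom.single (fun _ => ℝ) i)) :=
      fun _ _ h => hL (Pi.single_le_single.2 h)
    simpa [mul_comm] using apply_eq_mul_apply_one_of_monotone hmono r
  calc L α = L (∑ i, Pi.single i (α i)) := by rw [Finset.univ_sum_single]
    _ = ∑ i, L (Pi.single i (α i)) := map_sum L _ _
    _ = ∑ i, L (Pi.single i 1) * α i := Finset.sum_congr rfl fun i _ => coordinate i (α i)

end FunctionalEquations

/-- A choice correspondence (a set `F v` of possible outcomes for each valuation profile `v`) that
is onto and satisfies positive association of differences (PAD). It is allowed to be multivalued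
because types with the same valuations may be treated differently in case of ties. -/
structure IsPADCorrespondence (F : (I → A → ℝ) → Set A) : Prop where
  nonempty : ∀ v, (F v).Nonempty
  onto : ∀ a, ∃ v, a ∈ F v
  pad : ∀ {v v' a c}, a ∈ F v → c ∈ F v' →
    (∀ i b, b ≠ a → v i a - v i b < v' i a - v' i b) → c = a

/-- The vectors of valuation differences between `a` and `b` at which `a` can be chosen. -/
def choiceDiffs (F : (I → A → ℝ) → Set A) (a b : A) : Set (I → ℝ) :=
  (fun v i => v i a - v i b) '' {v | a ∈ F v}

/-- The margin of `a` over `b` at `α`: the largest amount that can be subtracted from all entries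
of `α` while keeping it, up to closure, a difference vector at which `a` can be chosen. It is
meaningful only for `a ≠ b`. -/
def margin (F : (I → A → ℝ) → Set A) (a b : A) (α : I → ℝ) : ℝ :=
  sSup {r : ℝ | α - Function.const I r ∈ choiceDiffs F a b}

namespace IsPADCorrespondence

variable {F : (I → A → ℝ) → Set A} {a b c : A} {α β γ : I → ℝ} {r : ℝ}

lemma choiceDiffs_nonempty (hF : IsPADCorrespondence F) (a b : A) :
    (choiceDiffs F a b).Nonempty :=
  Set.Nonempty.image _ (hF.onto a)

/-- Otherwise one could interpolate a profile at which PAD forces both `a` and `b`. -/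
lemma exists_add_nonneg (hF : IsPADCorrespondence F) (hab : a ≠ b)
    (hα : α ∈ choiceDiffs F a b) (hβ : β ∈ choiceDiffs F b a) : ∃ i, 0 ≤ α i + β i := by
  classical
  obtain ⟨v, hv, rfl⟩ := hα
  obtain ⟨v', hv', rfl⟩ := hβ
  by_contra! h
  let δ : I → ℝ := fun i => ((v i a - v i b) + (v' i a - v' i b)) / 2
  let w : I → A → ℝ := fun i => Function.update (Function.update
    (fun c => -max (v i a - v i c) (v' i b - v' i c + δ i) - 1) b (-δ i)) a 0
  have hwa (i : I) : w i a = 0 := by simp [w]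
  have hwb (i : I) : w i b = -δ i := by simp [w, hab.symm]
  have hw (i : I) {d : A} (hda : d ≠ a) (hdb : d ≠ b) :
      w i d = -max (v i a - v i d) (v' i b - v' i d + δ i) - 1 := by simp [w, hda, hdb]
  obtain ⟨c, hc⟩ := hF.nonempty w
  have hca : c = a := hF.pad hv hc fun i d hda => by
    rcases eq_or_ne d b with rfl | hdb
    · simp only [hwa, hwb, δ]
      linarith [h i]
    · rw [hwa, hw i hda hdb]
      linarith [le_max_left (v i a - v i d) (v' i b - v' i d + δ i)]
  have hcb : c = b := hF.pad hv' hc fun i d hdb => by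
    rcases eq_or_ne d a with rfl | hda
    · simp only [hwa, hwb, δ]
      linarith [h i]
    · rw [hwb, hw i hda hdb]
      linarith [le_max_right (v i a - v i d) (v' i b - v' i d + δ i)]
  exact hab (hca.symm.trans hcb)

lemma notMem_of_forall_lt (hF : IsPADCorrespondence F) (hab : a ≠ b)
    (hα : α ∈ choiceDiffs F a b) {v : I → A → ℝ} (h : ∀ i, α i < v i a - v i b) : b ∉ F v := by
  intro hb
  obtain ⟨i, hi⟩ := hF.exists_add_nonneg hab hα ⟨v, hb, rfl⟩
  linarith [h i]

lemma exists_eqOn_subset (hF : IsPADCorrespondence F) {S : Set A} (hS : S.Nonempty)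
    (w : I → A → ℝ) : ∃ v, (∀ i, Set.EqOn (v i) (w i) S) ∧ F v ⊆ S := by
  classical
  obtain ⟨a, ha⟩ := hS
  choose B hB using hF.choiceDiffs_nonempty a
  refine ⟨fun i => S.piecewise (w i) fun d => w i a - B d i - 1,
    fun i => Set.piecewise_eqOn _ _ _, fun d hd => ?_⟩
  by_contra hdS
  refine hF.notMem_of_forall_lt (ne_of_mem_of_not_mem ha hdS) (hB d) (fun i => ?_) hd
  simp only [Set.piecewise_eq_of_mem _ _ _ ha, Set.piecewise_eq_of_notMem _ _ _ hdS]
  linarith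

lemma mem_choiceDiffs_or_neg_mem (hF : IsPADCorrespondence F) (hab : a ≠ b) (α : I → ℝ) :
    α ∈ choiceDiffs F a b ∨ -α ∈ choiceDiffs F b a := by
  classical
  obtain ⟨v, hv, hvS⟩ := hF.exists_eqOn_subset (S := {a, b}) (by simp)
    fun i => Function.update 0 a (α i)
  have hva (i : I) : v i a = α i := by simp [hv i (by simp : a ∈ _)]
  have hvb (i : I) : v i b = 0 := by simp [hv i (by simp : b ∈ _), hab.symm]
  obtain ⟨c, hc⟩ := hF.nonempty v
  rcases hvS hc with rfl | rfl
  · exact Or.inl ⟨v, hc, by ext i; simp [hva, hvb]⟩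
  · exact Or.inr ⟨v, hc, by ext i; simp [hva, hvb]⟩

lemma mem_choiceDiffs_of_forall_lt (hF : IsPADCorrespondence F) (hab : a ≠ b)
    (hα : α ∈ choiceDiffs F a b) (h : ∀ i, α i < β i) : β ∈ choiceDiffs F a b := by
  refine (hF.mem_choiceDiffs_or_neg_mem hab β).resolve_right fun hβ => ?_
  obtain ⟨i, hi⟩ := hF.exists_add_nonneg hab hα hβ
  rw [Pi.neg_apply] at hi
  linarith [h i]

/-- At a profile with difference vector `γ` between `a` and `c`, where `b` is placed so that it
loses to `a` and `c` loses to `b`, only `a` is left. -/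
lemma mem_choiceDiffs_of_forall_add_lt (hF : IsPADCorrespondence F) (hab : a ≠ b) (hbc : b ≠ c)
    (hac : a ≠ c) (hα : α ∈ choiceDiffs F a b) (hβ : β ∈ choiceDiffs F b c)
    (h : ∀ i, α i + β i < γ i) : γ ∈ choiceDiffs F a c := by
  classical
  obtain ⟨v, hv, hvS⟩ := hF.exists_eqOn_subset (S := {a, b, c}) (by simp)
    fun i => Function.update (Function.update 0 a (γ i)) b ((γ i - α i + β i) / 2)
  have hva (i : I) : v i a = γ i := by simp [hv i (by simp : a ∈ _), hab]
  have hvb (i : I) : v i b = (γ i - α i + β i) / 2 := by simp [hv i (by simp : b ∈ _)]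
  have hvc (i : I) : v i c = 0 := by simp [hv i (by simp : c ∈ _), hac.symm, hbc.symm]
  have hb : b ∉ F v := hF.notMem_of_forall_lt hab hα fun i => by
    rw [hva, hvb]; linarith [h i]
  have hc : c ∉ F v := hF.notMem_of_forall_lt hbc hβ fun i => by
    rw [hvb, hvc]; linarith [h i]
  obtain ⟨d, hd⟩ := hF.nonempty v
  rcases hvS hd with rfl | rfl | rfl
  · exact ⟨v, hd, by ext i; simp [hva, hvc]⟩
  · exact absurd hd hb
  · exact absurd hd hc

lemma add_nonpos_of_sub_const_mem (hF : IsPADCorrespondence F) (hab : a ≠ b) {p q : ℝ}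
    (hp : α - Function.const I p ∈ choiceDiffs F a b)
    (hq : -α - Function.const I q ∈ choiceDiffs F b a) : p + q ≤ 0 := by
  obtain ⟨i, hi⟩ := hF.exists_add_nonneg hab hp hq
  simp only [Pi.sub_apply, Pi.neg_apply, Function.const_apply] at hi
  linarith

section Margin

variable [Finite I]

lemma exists_sub_const_mem_choiceDiffs (hF : IsPADCorrespondence F) (hab : a ≠ b) (α : I → ℝ) :
    ∃ r : ℝ, α - Function.const I r ∈ choiceDiffs F a b := by
  obtain ⟨β, hβ⟩ := hF.choiceDiffs_nonempty a b
  obtain ⟨M, hM⟩ := Finite.bddAbove_range (β - α)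
  refine ⟨-M - 1, hF.mem_choiceDiffs_of_forall_lt hab hβ fun i => ?_⟩
  have : (β - α) i ≤ M := hM (Set.mem_range_self i)
  simp only [Pi.sub_apply, Function.const_apply] at this ⊢
  linarith

lemma isLUB_margin (hF : IsPADCorrespondence F) (hab : a ≠ b) (α : I → ℝ) :
    IsLUB {r : ℝ | α - Function.const I r ∈ choiceDiffs F a b} (margin F a b α) := by
  obtain ⟨q, hq⟩ := hF.exists_sub_const_mem_choiceDiffs hab.symm (-α)
  exact isLUB_csSup (hF.exists_sub_const_mem_choiceDiffs hab α)
    ⟨-q, fun p hp => by linarith [hF.add_nonpos_of_sub_const_mem hab hp hq]⟩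

lemma sub_const_mem_of_lt_margin (hF : IsPADCorrespondence F) (hab : a ≠ b)
    (hr : r < margin F a b α) : α - Function.const I r ∈ choiceDiffs F a b := by
  obtain ⟨q, hq, hrq⟩ := (lt_isLUB_iff (hF.isLUB_margin hab α)).1 hr
  exact hF.mem_choiceDiffs_of_forall_lt hab hq fun i => sub_lt_sub_left hrq _

lemma margin_neg (hF : IsPADCorrespondence F) (hab : a ≠ b) (α : I → ℝ) :
    margin F b a (-α) = -margin F a b α := by
  have hsup := hF.isLUB_margin hab α
  have hsup_neg := hF.isLUB_margin hab.symm (-α)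
  apply le_antisymm
  · refine hsup_neg.2 fun q hq => le_neg_of_le_neg (hsup.2 fun p hp => ?_)
    exact le_neg_iff_add_nonpos_right.2 (hF.add_nonpos_of_sub_const_mem hab hp hq)
  · refine neg_le.1 (le_of_forall_gt_imp_ge_of_dense fun p hp => neg_le.1 (hsup_neg.1 ?_))
    have hmem := (hF.mem_choiceDiffs_or_neg_mem hab (α - Function.const I p)).resolve_left
      fun h => hp.not_ge (hsup.1 h)
    rwa [neg_sub', Function.const_neg] at hmem

lemma margin_add_le (hF : IsPADCorrespondence F) (hab : a ≠ b) (hbc : b ≠ c) (hac : a ≠ c)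
    (α β : I → ℝ) : margin F a b α + margin F b c β ≤ margin F a c (α + β) := by
  refine add_le_of_forall_lt fun p hp q hq => le_of_forall_lt_imp_le_of_dense fun r hr => ?_
  refine (hF.isLUB_margin hac _).1 (hF.mem_choiceDiffs_of_forall_add_lt hab hbc hac
    (hF.sub_const_mem_of_lt_margin hab hp) (hF.sub_const_mem_of_lt_margin hbc hq) fun i => ?_)
  simp only [Pi.sub_apply, Pi.add_apply, Function.const_apply]
  linarith

lemma isAdditiveOnTriples_margin (hF : IsPADCorrespondence F) :
    IsAdditiveOnTriples (margin F) := by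
  intro a b c hab hbc hac α β
  refine le_antisymm ?_ (hF.margin_add_le hab hbc hac α β)
  have h := hF.margin_add_le hbc.symm hab.symm hac.symm (-β) (-α)
  rw [hF.margin_neg hbc, hF.margin_neg hab, ← neg_add_rev α β, hF.margin_neg hac] at h
  linarith

lemma margin_mono (hF : IsPADCorrespondence F) (hab : a ≠ b) : Monotone (margin F a b) := by
  intro α β hαβ
  refine le_of_forall_lt_imp_le_of_dense fun r hr => ?_
  obtain ⟨q, hrq, hq⟩ := exists_between hr
  refine (hF.isLUB_margin hab β).1 (hF.mem_choiceDiffs_of_forall_lt hab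
    (hF.sub_const_mem_of_lt_margin hab hq) fun i => ?_)
  simp only [Pi.sub_apply, Function.const_apply]
  linarith [hαβ i]

lemma add_le_margin_add_const (hF : IsPADCorrespondence F) (hab : a ≠ b) (α : I → ℝ) (r : ℝ) :
    margin F a b α + r ≤ margin F a b (α + Function.const I r) := by
  refine le_sub_iff_add_le.1 ((hF.isLUB_margin hab α).2 fun p hp => le_sub_iff_add_le.2 ?_)
  refine (hF.isLUB_margin hab _).1 ?_
  rwa [Set.mem_ofPred_eq, ← Function.const_add, add_sub_add_right_eq_sub]

lemma margin_add_const (hF : IsPADCorrespondence F) (hab : a ≠ b) (α : I → ℝ) (r : ℝ) :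
    margin F a b (α + Function.const I r) = margin F a b α + r := by
  refine le_antisymm ?_ (hF.add_le_margin_add_const hab α r)
  have h := hF.add_le_margin_add_const hab (α + Function.const I r) (-r)
  rw [← Function.const_neg, add_neg_cancel_right] at h
  linarith

lemma margin_nonneg (hF : IsPADCorrespondence F) (hab : a ≠ b) {v : I → A → ℝ} (hv : a ∈ F v) :
    0 ≤ margin F a b fun i => v i a - v i b :=
  (hF.isLUB_margin hab _).1 ⟨v, hv, by simp⟩

end Margin

theorem exists_margin_eq [Fintype I] (hA : 3 ≤ ENat.card A) (hF : IsPADCorrespondence F) :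
    ∃ (k : I → ℝ) (C : A → ℝ), (∀ i, 0 ≤ k i) ∧ (∃ i, k i ≠ 0) ∧
      ∀ a b, a ≠ b → ∀ α, margin F a b α = ∑ i, k i * α i + (C a - C b) := by
  obtain ⟨L, C, hLC⟩ := hF.isAdditiveOnTriples_margin.exists_addMonoidHom hA
  obtain ⟨a, b, -, hab, -⟩ := exists_ne_ne_ne_of_three_le_card hA
  have hL : Monotone L := fun α β hαβ => by
    have h := hF.margin_mono hab hαβ
    rwa [hLC a b hab, hLC a b hab, add_le_add_iff_right] at h
  have hL_one : L (Function.const I 1) = 1 := by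
    have h := hF.margin_add_const hab 0 1
    rwa [zero_add, hLC a b hab, hLC a b hab, map_zero, zero_add, add_comm, add_right_inj] at h
  obtain ⟨k, hk, hLk⟩ := exists_nonneg_weights_of_monotone hL
  refine ⟨k, C, hk, ?_, fun x y hxy α => by rw [hLC x y hxy, hLk]⟩
  by_contra! hk_zero
  simp [hLk, hk_zero] at hL_one

theorem exists_affine_maximizer [Fintype I] (hA : 3 ≤ ENat.card A) (hF : IsPADCorrespondence F) :
    ∃ (k : I → ℝ) (C : A → ℝ), (∀ i, 0 ≤ k i) ∧ (∃ i, k i ≠ 0) ∧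
      ∀ v, ∀ a ∈ F v, ∀ b, (∑ i, k i * v i b) + C b ≤ (∑ i, k i * v i a) + C a := by
  obtain ⟨k, C, hk, hk_ne, hmargin⟩ := hF.exists_margin_eq hA
  refine ⟨k, C, hk, hk_ne, fun v a hv b => ?_⟩
  rcases eq_or_ne a b with rfl | hab
  · exact le_rfl
  have h := hF.margin_nonneg hab hv
  simp only [hmargin a b hab, mul_sub, Finset.sum_sub_distrib] at h
  linarith

end IsPADCorrespondence

/-- `u` ranks (alternative, payment) pairs like the quasilinear type `p a - z`. For a strictly
parallel type this holds with `p` the willingness to pay, and incentive compatibility only depends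
on this ranking. -/
def IsQuasilinearWith (u : Util A) (p : A → ℝ) : Prop :=
  ∀ a b z z', u a z ≤ u b z' ↔ p a - z ≤ p b - z'

lemma IsStrictlyParallel.isQuasilinearWith_wtp [Fintype A] [Nonempty A] {u : Util A}
    (hu : IsStrictlyParallel u) : IsQuasilinearWith u (wtp u) := by
  intro a b z z'
  rw [← hu.2.2 b a z, (hu.1 b).2.le_iff_ge]
  constructor <;> intro h <;> linarith

lemma UnrestrictedWTP.exists_wtp_sub_eq [Fintype A] [Nonempty A] {U : Set (Util A)}
    (hU : UnrestrictedWTP U) (v : A → ℝ) :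
    ∃ u ∈ U, ∀ a b, wtp u a - wtp u b = v a - v b := by
  obtain ⟨o, ho⟩ := Finite.exists_min v
  obtain ⟨u, hu, huv⟩ := hU (fun a => v a - v o) (fun a => sub_nonneg.2 (ho a)) ⟨o, sub_self _⟩
  exact ⟨u, hu, fun a b => by rw [huv, huv, sub_sub_sub_cancel_right]⟩

section Mechanisms

variable [DecidableEq I] {U : I → Set (Util A)} {p : Util A → A → ℝ}
  {x : (I → Util A) → A} {t : (I → Util A) → I → ℝ}

lemma DSIC.weak_monotonicity (hDSIC : DSIC U x t)
    (hp : ∀ i, ∀ u ∈ U i, IsQuasilinearWith u (p u)) {u : I → Util A} (hu : ∀ j, u j ∈ U j)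
    {i : I} {w : Util A} (hw : w ∈ U i) :
    p w (x u) - p w (x (Function.update u i w)) ≤
      p (u i) (x u) - p (u i) (x (Function.update u i w)) := by
  have hu' : ∀ j, Function.update u i w j ∈ U j :=
    (Function.forall_update_iff u fun j v => v ∈ U j).2 ⟨hw, fun j _ => hu j⟩
  have truth_at_w := (hp i w hw _ _ _ _).1 (hDSIC u hu i w hw)
  have truth_at_u := hDSIC _ hu' i (u i) (hu i)
  rw [Function.update_idem, Function.update_eq_self, hp i _ (hu i)] at truth_at_u
  linarith

/-- Moving the agents one at a time, weak monotonicity rules out any change of outcome. -/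
lemma DSIC.choice_eq_of_forall_sub_lt_sub [Finite I] (hDSIC : DSIC U x t)
    (hp : ∀ i, ∀ u ∈ U i, IsQuasilinearWith u (p u)) {u u' : I → Util A}
    (hu : ∀ j, u j ∈ U j) (hu' : ∀ j, u' j ∈ U j)
    (h : ∀ i b, b ≠ x u → p (u i) (x u) - p (u i) b < p (u' i) (x u) - p (u' i) b) :
    x u' = x u := by
  cases nonempty_fintype I
  suffices ∀ s : Finset I, x (s.piecewise u' u) = x u by simpa using this Finset.univ
  intro s
  induction s using Finset.induction_on with
  | empty => simp
  | insert i s hi ih =>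
    have hmem (j : I) : s.piecewise u' u j ∈ U j :=
      s.piecewise_cases u' u (· ∈ U j) (hu' j) (hu j)
    have hmono := hDSIC.weak_monotonicity hp hmem (hu' i)
    rw [← Finset.piecewise_insert, ih, Finset.piecewise_eq_of_notMem _ _ _ hi] at hmono
    by_contra hne
    exact hmono.not_gt (h i _ hne)

/-- The outcomes of the mechanism at the type profiles whose valuations `p` are, up to a constant
for each agent, the given ones. -/
def inducedChoice (U : I → Set (Util A)) (p : Util A → A → ℝ) (x : (I → Util A) → A)
    (v : I → A → ℝ) : Set A :=
  x '' {u | (∀ j, u j ∈ U j) ∧ ∀ i a b, p (u i) a - p (u i) b = v i a - v i b}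

lemma DSIC.isPADCorrespondence_inducedChoice [Finite I] (hDSIC : DSIC U x t)
    (hp : ∀ i, ∀ u ∈ U i, IsQuasilinearWith u (p u))
    (hrich : ∀ i (v : A → ℝ), ∃ u ∈ U i, ∀ a b, p u a - p u b = v a - v b)
    (hOnto : OntoMech U x) : IsPADCorrespondence (inducedChoice U p x) where
  nonempty v := by
    choose u hu huv using fun i => hrich i (v i)
    exact ⟨x u, u, ⟨hu, huv⟩, rfl⟩
  onto a := by
    obtain ⟨u, hu, hx⟩ := hOnto a
    exact ⟨fun i => p (u i), u, ⟨hu, fun _ _ _ => rfl⟩, hx⟩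
  pad := by
    rintro v v' _ _ ⟨u, ⟨hu, huv⟩, rfl⟩ ⟨u', ⟨hu', huv'⟩, rfl⟩ h
    refine hDSIC.choice_eq_of_forall_sub_lt_sub hp hu hu' fun i b hb => ?_
    rw [huv, huv']
    exact h i b hb

end Mechanisms

theorem roberts_strictly_parallel_general [Fintype I] [DecidableEq I] (hA : 3 ≤ ENat.card A)
    (U : I → Set (Util A)) (p : Util A → A → ℝ)
    (hp : ∀ i, ∀ u ∈ U i, IsQuasilinearWith u (p u))
    (hrich : ∀ i (v : A → ℝ), ∃ u ∈ U i, ∀ a b, p u a - p u b = v a - v b)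
    (x : (I → Util A) → A) (t : (I → Util A) → I → ℝ)
    (hDSIC : DSIC U x t) (hOnto : OntoMech U x) :
    ∃ (k : I → ℝ) (C : A → ℝ), (∀ i, 0 ≤ k i) ∧ (∃ i, k i ≠ 0) ∧
      ∀ u : I → Util A, (∀ j, u j ∈ U j) → ∀ b : A,
        (∑ i, k i * p (u i) b) + C b ≤ (∑ i, k i * p (u i) (x u)) + C (x u) := by
  obtain ⟨k, C, hk, hk_ne, hmax⟩ :=
    (hDSIC.isPADCorrespondence_inducedChoice hp hrich hOnto).exists_affine_maximizer hA
  exact ⟨k, C, hk, hk_ne, fun u hu =>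
    hmax (fun i => p (u i)) (x u) ⟨u, ⟨hu, fun _ _ _ => rfl⟩, rfl⟩⟩

/-- Roberts' theorem on strictly parallel domains. With `|A| ≥ 3`
and an unrestricted strictly parallel domain, every DSIC, deterministic, onto mechanism
has a choice rule that is an affine maximizer of willingness to pay. -/
theorem roberts_strictly_parallel
    [Fintype A] [Nonempty A] [Fintype I] [DecidableEq I]
    (hA : 3 ≤ Fintype.card A)
    (U : I → Set (Util A))
    (hpar : ∀ i, ∀ u ∈ U i, IsStrictlyParallel u)
    (hunr : ∀ i, UnrestrictedWTP (U i))
    (x : (I → Util A) → A) (t : (I → Util A) → I → ℝ)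
    (hDSIC : DSIC U x t) (hOnto : OntoMech U x) :
    ∃ (k : I → ℝ) (C : A → ℝ), (∀ i, 0 ≤ k i) ∧ (∃ i, k i ≠ 0) ∧
      ∀ u : I → Util A, (∀ j, u j ∈ U j) → ∀ b : A,
        (∑ i, k i * wtp (u i) b) + C b ≤ (∑ i, k i * wtp (u i) (x u)) + C (x u) := by
  exact roberts_strictly_parallel_general (by simpa using hA) U wtp
    (fun i u hu => (hpar i u hu).isQuasilinearWith_wtp) (fun i => (hunr i).exists_wtp_sub_eq)
    x t hDSIC hOnto

end NQLSC
end
end
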